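/- Let p, q ∈ ℂ and μ ∈ ℂ with Re μ > 0, and assume θ[p,q](iν) ≠ 0 for every ν with Re ν > 0. Then: w₃[p,q](i/μ) = −μ² w₁[−q,p](iμ); w₃'[p,q](i/μ) = μ⁴ w₁'[−q,p](iμ) + 2μ³ w₁[−q,p](iμ); w₃''[p,q](i/μ) = −μ⁶ w₁''[−q,p](iμ) − 6μ⁵ w₁'[−q,p](iμ) − 6μ⁴ w₁[−q,p](iμ); w₃⁽³⁾[p,q](i/μ) = μ⁸ w₁⁽³⁾[−q,p](iμ) + 12μ⁷ w₁''[−q,p](iμ) + 36μ⁶ w₁'[−q,p](iμ) + 24μ⁵ w₁[−q,p](iμ); w₃⁽⁴⁾[p,q](i/μ) = −μ¹⁰ w₁⁽⁴⁾[−q,p](iμ) − 20μ⁹ w₁⁽³⁾[−q,p](iμ) − 120μ⁸ w₁''[−q,p](iμ) − 240μ⁷ w₁'[−q,p](iμ) − 120μ⁶ w₁[−q,p](iμ). -/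

import Mathlib

noncomputable section

/-- The theta function with characteristics `θ[p,q](iμ)`. -/
def theta (p q μ : ℂ) : ℂ :=
  ∑' m : ℤ, Complex.exp (-(Real.pi : ℂ) * ((m : ℂ) + p) ^ 2 * μ +
    2 * (Real.pi : ℂ) * Complex.I * ((m : ℂ) + p) * q)

/-- The characteristic derivative `∂qθ[p,q](iμ)`. -/
def thetaQ (p q μ : ℂ) : ℂ :=
  2 * (Real.pi : ℂ) * Complex.I *
    ∑' m : ℤ, ((m : ℂ) + p) * Complex.exp (-(Real.pi : ℂ) * ((m : ℂ) + p) ^ 2 * μ +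
      2 * (Real.pi : ℂ) * Complex.I * ((m : ℂ) + p) * q)

/-- The n-th μ-derivative `∂μⁿθ[p,q](iμ)`, given by its absolutely convergent series. -/
def thetaD (n : ℕ) (p q μ : ℂ) : ℂ :=
  (-(Real.pi : ℂ)) ^ n *
    ∑' m : ℤ, ((m : ℂ) + p) ^ (2 * n) *
      Complex.exp (-(Real.pi : ℂ) * ((m : ℂ) + p) ^ 2 * μ +
        2 * (Real.pi : ℂ) * Complex.I * ((m : ℂ) + p) * q)

/-- The n-th μ-derivative `∂μⁿ∂qθ[p,q](iμ)`, given by its absolutely convergent series. -/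
def thetaQD (n : ℕ) (p q μ : ℂ) : ℂ :=
  2 * Complex.I * (-1 : ℂ) ^ n * (Real.pi : ℂ) ^ (n + 1) *
    ∑' m : ℤ, ((m : ℂ) + p) ^ (2 * n + 1) *
      Complex.exp (-(Real.pi : ℂ) * ((m : ℂ) + p) ^ 2 * μ +
        2 * (Real.pi : ℂ) * Complex.I * ((m : ℂ) + p) * q)

/-- The constant `C(j|n) = (−i)ⁿ n! / (2ʲ (n−2j)! (2j)!!)` with `(2j)!! = 2ʲ j!`. -/
def Ccoef (j n : ℕ) : ℂ :=
  (-Complex.I) ^ n * (n.factorial : ℂ) /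
    ((2 : ℂ) ^ j * ((n - 2 * j).factorial : ℂ) * ((2 : ℂ) ^ j * (j.factorial : ℂ)))

/-- `w₁[p,q](iμ)` of the two-parametric family. -/
def w1 (p q μ : ℂ) : ℂ :=
  -(Complex.I / 2) * theta 0 0 μ * theta 0 (1 / 2) μ * thetaQ p (q + 1 / 2) μ /
    (Complex.exp ((Real.pi : ℂ) * Complex.I * p) * theta p q μ)

/-- `w₂[p,q](iμ)` of the two-parametric family. -/
def w2 (p q μ : ℂ) : ℂ :=
  (Complex.I / 2) * theta (1 / 2) 0 μ * theta 0 (1 / 2) μ *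
    thetaQ (p + 1 / 2) (q + 1 / 2) μ /
    (Complex.exp ((Real.pi : ℂ) * Complex.I * p) * theta p q μ)

/-- `w₃[p,q](iμ)` of the two-parametric family. -/
def w3 (p q μ : ℂ) : ℂ :=
  -(1 / 2 : ℂ) * theta (1 / 2) 0 μ * theta 0 0 μ * thetaQ (p + 1 / 2) q μ / theta p q μ

/-- The conformal factor `F[p,q](iμ)` of the two-parametric family. -/
def Ftwo (Λ p q μ : ℂ) : ℂ :=
  (2 / ((Real.pi : ℂ) * Λ)) * (theta p q μ / thetaQ p q μ) ^ 2

/-- `w₁[q₀](iμ)` of the one-parametric family. -/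
def v1 (q0 μ : ℂ) : ℂ := 1 / (μ + q0) + 2 * thetaD 1 (1 / 2) 0 μ / theta (1 / 2) 0 μ

/-- `w₂[q₀](iμ)` of the one-parametric family. -/
def v2 (q0 μ : ℂ) : ℂ := 1 / (μ + q0) + 2 * thetaD 1 0 0 μ / theta 0 0 μ

/-- `w₃[q₀](iμ)` of the one-parametric family. -/
def v3 (q0 μ : ℂ) : ℂ := 1 / (μ + q0) + 2 * thetaD 1 0 (1 / 2) μ / theta 0 (1 / 2) μ

/-- The conformal factor `F[q₀](iμ) = C(μ+q₀)²` of the one-parametric family. -/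
def Fone (C q0 μ : ℂ) : ℂ := C * (μ + q0) ^ 2

/-- The Seeley–de Witt coefficient `ã₀[p,q](iμ)` of the two-parametric family. -/
def a0two (Λ p q μ : ℂ) : ℂ :=
  4 * Ftwo Λ p q μ ^ 2 * w1 p q μ * w2 p q μ * w3 p q μ

/-- The Seeley–de Witt coefficient `ã₀[q₀](iμ)` of the one-parametric family. -/
def a0one (C q0 μ : ℂ) : ℂ :=
  4 * Fone C q0 μ ^ 2 * v1 q0 μ * v2 q0 μ * v3 q0 μ

/-- The Seeley–de Witt coefficient `ã₂[p,q](iμ)` of the two-parametric family. -/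
def a2two (Λ p q μ : ℂ) : ℂ :=
  -(Ftwo Λ p q μ / 3) * (w1 p q μ ^ 2 + w2 p q μ ^ 2 + w3 p q μ ^ 2) +
  (Ftwo Λ p q μ / 6) *
    ((w1 p q μ ^ 2 * w2 p q μ ^ 2 - deriv (w3 p q) μ ^ 2) / w3 p q μ ^ 2 +
     (w1 p q μ ^ 2 * w3 p q μ ^ 2 - deriv (w2 p q) μ ^ 2) / w2 p q μ ^ 2 +
     (w2 p q μ ^ 2 * w3 p q μ ^ 2 - deriv (w1 p q) μ ^ 2) / w1 p q μ ^ 2) -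
  (Ftwo Λ p q μ / 3) *
    (deriv (w1 p q) μ * deriv (w2 p q) μ / (w1 p q μ * w2 p q μ) +
     deriv (w1 p q) μ * deriv (w3 p q) μ / (w1 p q μ * w3 p q μ) +
     deriv (w2 p q) μ * deriv (w3 p q) μ / (w2 p q μ * w3 p q μ)) +
  (Ftwo Λ p q μ / 3) *
    (iteratedDeriv 2 (w1 p q) μ / w1 p q μ + iteratedDeriv 2 (w2 p q) μ / w2 p q μ +
     iteratedDeriv 2 (w3 p q) μ / w3 p q μ) -
  deriv (Ftwo Λ p q) μ ^ 2 / (2 * Ftwo Λ p q μ) + iteratedDeriv 2 (Ftwo Λ p q) μ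


section Helpers

open Complex

lemma h8_theta_eq (p q μ : ℂ) : theta p q μ =
    cexp (-(Real.pi : ℂ) * p ^ 2 * μ + 2 * Real.pi * I * p * q) *
      jacobiTheta₂ (q + I * p * μ) (I * μ) := by
  unfold theta jacobiTheta₂ jacobiTheta₂_term
  rw [← tsum_mul_left]
  refine tsum_congr fun m => ?_
  rw [← Complex.exp_add]
  congr 1
  linear_combination (-2 * Real.pi * m * p * μ - Real.pi * m ^ 2 * μ) * I_sq

lemma h8_thetaQ_eq (p q μ : ℂ) (hμ : 0 < μ.re) : thetaQ p q μ =
    cexp (-(Real.pi : ℂ) * p ^ 2 * μ + 2 * Real.pi * I * p * q) *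
      (jacobiTheta₂' (q + I * p * μ) (I * μ) +
        2 * Real.pi * I * p * jacobiTheta₂ (q + I * p * μ) (I * μ)) := by
  have him : 0 < (I * μ).im := by simpa using hμ
  have h1 := hasSum_jacobiTheta₂_term (q + I * p * μ) him
  have h2 := hasSum_jacobiTheta₂'_term (q + I * p * μ) him
  have h3 := (h2.add (h1.mul_left (2 * Real.pi * I * p))).mul_left
    (cexp (-(Real.pi : ℂ) * p ^ 2 * μ + 2 * Real.pi * I * p * q))
  rw [← h3.tsum_eq]
  unfold thetaQ
  rw [← tsum_mul_left]
  refine tsum_congr fun m => ?_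
  have : cexp (-(Real.pi : ℂ) * ((m : ℂ) + p) ^ 2 * μ + 2 * (Real.pi : ℂ) * I * ((m : ℂ) + p) * q)
      = cexp (-(Real.pi : ℂ) * p ^ 2 * μ + 2 * Real.pi * I * p * q) *
        jacobiTheta₂_term m (q + I * p * μ) (I * μ) := by
    unfold jacobiTheta₂_term
    rw [← Complex.exp_add]
    congr 1
    linear_combination (-2 * Real.pi * m * p * μ - Real.pi * m ^ 2 * μ) * I_sq
  rw [this]
  unfold jacobiTheta₂'_term
  ring

lemma h8_inv_re {μ : ℂ} (hμ : 0 < μ.re) : 0 < (1 / μ).re := by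
  have h0 : μ ≠ 0 := by rintro rfl; simp at hμ
  rw [one_div, inv_re]
  exact div_pos hμ (normSq_pos.mpr h0)

lemma h8_theta_inv (p q μ : ℂ) (hμ : 0 < μ.re) : theta p q (1 / μ) =
    1 / (1 / μ) ^ (1 / 2 : ℂ) * cexp (2 * Real.pi * I * p * q) * theta (-q) p μ := by
  have h0 : μ ≠ 0 := by rintro rfl; simp at hμ
  rw [h8_theta_eq, h8_theta_eq, jacobiTheta₂_functional_equation]
  have e1 : -I * (I * (1 / μ)) = 1 / μ := by linear_combination (-(1 / μ)) * I_sq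
  have e2 : (q + I * p * (1 / μ)) / (I * (1 / μ)) = p + I * (-q) * μ := by
    field_simp
    linear_combination (q * μ) * I_sq
  have e3 : -1 / (I * (1 / μ)) = I * μ := by
    field_simp
    linear_combination (-1) * I_sq
  have e4 : cexp (-(Real.pi : ℂ) * p ^ 2 * (1 / μ) + 2 * Real.pi * I * p * q) *
      cexp (-Real.pi * I * (q + I * p * (1 / μ)) ^ 2 / (I * (1 / μ))) =
      cexp (2 * Real.pi * I * p * q) *
        cexp (-(Real.pi : ℂ) * (-q) ^ 2 * μ + 2 * Real.pi * I * (-q) * p) := by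
    rw [← Complex.exp_add, ← Complex.exp_add]
    congr 1
    field_simp
    linear_combination (-p ^ 2) * I_sq
  rw [e1, e2, e3]
  linear_combination (1 / (1 / μ) ^ (1 / 2 : ℂ) * jacobiTheta₂ (p + I * (-q) * μ) (I * μ)) * e4

lemma h8_thetaQ_inv (p q μ : ℂ) (hμ : 0 < μ.re) : thetaQ p q (1 / μ) =
    1 / (1 / μ) ^ (1 / 2 : ℂ) * (-I * μ) * cexp (2 * Real.pi * I * p * q) * thetaQ (-q) p μ := by
  have h0 : μ ≠ 0 := by rintro rfl; simp at hμ
  rw [h8_thetaQ_eq _ _ _ (h8_inv_re hμ), h8_thetaQ_eq _ _ _ hμ,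
    jacobiTheta₂_functional_equation, jacobiTheta₂'_functional_equation]
  have e1 : -I * (I * (1 / μ)) = 1 / μ := by linear_combination (-(1 / μ)) * I_sq
  have e2 : (q + I * p * (1 / μ)) / (I * (1 / μ)) = p + I * (-q) * μ := by
    field_simp
    linear_combination (q * μ) * I_sq
  have e3 : -1 / (I * (1 / μ)) = I * μ := by
    field_simp
    linear_combination (-1) * I_sq
  have e4 : cexp (-(Real.pi : ℂ) * p ^ 2 * (1 / μ) + 2 * Real.pi * I * p * q) *
      cexp (-Real.pi * I * (q + I * p * (1 / μ)) ^ 2 / (I * (1 / μ))) =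
      cexp (2 * Real.pi * I * p * q) *
        cexp (-(Real.pi : ℂ) * (-q) ^ 2 * μ + 2 * Real.pi * I * (-q) * p) := by
    rw [← Complex.exp_add, ← Complex.exp_add]
    congr 1
    field_simp
    linear_combination (-p ^ 2) * I_sq
  rw [e1, e2, e3]
  have e5 : ∀ x : ℂ, x / (I * (1 / μ)) = x * (-I * μ) := by
    intro x
    field_simp
    linear_combination x * I_sq
  rw [e5]
  generalize hJ : jacobiTheta₂ (p + I * (-q) * μ) (I * μ) = J
  generalize hK : jacobiTheta₂' (p + I * (-q) * μ) (I * μ) = K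
  generalize hA : cexp (-(Real.pi : ℂ) * p ^ 2 * (1 / μ) + 2 * Real.pi * I * p * q) = A at *
  generalize hB : cexp (-Real.pi * I * (q + I * p * (1 / μ)) ^ 2 / (I * (1 / μ))) = B at *
  generalize 1 / (1 / μ) ^ (1 / 2 : ℂ) = s
  have e6 : μ * (1 / μ) = 1 := by field_simp
  linear_combination (s * (-I * μ) * (K + 2 * Real.pi * I * (-q) * J)) * e4
    + (A * B * s * J * 2 * Real.pi * p * I) * (I ^ 2 * e6 + I_sq)

lemma h8_diff_jac (p q : ℂ) {μ : ℂ} (hμ : 0 < μ.re) :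
    DifferentiableAt ℂ (fun ν => jacobiTheta₂ (q + I * p * ν) (I * ν)) μ := by
  have him : 0 < (I * μ).im := by simpa using hμ
  have h := (hasFDerivAt_jacobiTheta₂ (q + I * p * μ) him).differentiableAt
  have hg : DifferentiableAt ℂ (fun ν : ℂ => ((q + I * p * ν, I * ν) : ℂ × ℂ)) μ := by fun_prop
  exact DifferentiableAt.comp (g := fun p : ℂ × ℂ ↦ jacobiTheta₂ p.1 p.2) μ h hg

lemma h8_diff_jac' (p q : ℂ) {μ : ℂ} (hμ : 0 < μ.re) :
    DifferentiableAt ℂ (fun ν => jacobiTheta₂' (q + I * p * ν) (I * ν)) μ := by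
  obtain ⟨T, hT, hT'⟩ := exists_between hμ
  obtain ⟨S, hS⟩ := exists_gt |(q + I * p * μ).im|
  let U : Set ℂ := {ν | |(q + I * p * ν).im| < S} ∩ {ν | T < ν.re}
  have hU : IsOpen U := by
    refine IsOpen.inter (isOpen_lt ?_ continuous_const)
      (isOpen_lt continuous_const continuous_re)
    exact (continuous_im.comp (by fun_prop)).abs
  have hs : Summable fun n : ℤ =>
      2 * Real.pi * |(n : ℝ)| * Real.exp (-Real.pi * (T * n ^ 2 - 2 * S * |(n : ℝ)|)) := by
    have := (summable_pow_mul_jacobiTheta₂_term_bound S hT 1).mul_left (2 * Real.pi)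
    refine this.congr fun n => ?_
    push_cast
    ring
  have := differentiableOn_tsum_of_summable_norm (U := U)
    (F := fun n ν => jacobiTheta₂'_term n (q + I * p * ν) (I * ν)) hs ?_ hU ?_
  · exact this.differentiableAt (hU.mem_nhds ⟨hS, hT'⟩)
  · intro n
    unfold jacobiTheta₂'_term jacobiTheta₂_term
    exact Differentiable.differentiableOn (by fun_prop)
  · intro n w hw
    have := norm_jacobiTheta₂'_term_le (z := q + I * p * w) (τ := I * w) hT (le_of_lt hw.1)
      (by simpa using (le_of_lt hw.2)) n
    simpa using this

lemma h8_diff_theta (p q : ℂ) {μ : ℂ} (hμ : 0 < μ.re) : DifferentiableAt ℂ (theta p q) μ := by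
  rw [show theta p q = _ from funext (h8_theta_eq p q)]
  exact DifferentiableAt.mul (by fun_prop) (h8_diff_jac p q hμ)

lemma h8_isOpen : IsOpen {ν : ℂ | 0 < ν.re} := isOpen_lt continuous_const continuous_re

lemma h8_diff_thetaQ (p q : ℂ) {μ : ℂ} (hμ : 0 < μ.re) : DifferentiableAt ℂ (thetaQ p q) μ := by
  have : thetaQ p q =ᶠ[nhds μ] fun μ =>
    cexp (-(Real.pi : ℂ) * p ^ 2 * μ + 2 * Real.pi * I * p * q) *
      (jacobiTheta₂' (q + I * p * μ) (I * μ) +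
        2 * Real.pi * I * p * jacobiTheta₂ (q + I * p * μ) (I * μ)) := by
    filter_upwards [h8_isOpen.mem_nhds hμ] with ν hν
    exact h8_thetaQ_eq p q ν hν
  refine DifferentiableAt.congr_of_eventuallyEq ?_ this
  exact DifferentiableAt.mul (by fun_prop)
    ((h8_diff_jac' p q hμ).add ((h8_diff_jac p q hμ).const_mul _))

lemma h8_w3_inv (p q μ : ℂ) (hμ : 0 < μ.re) :
    w3 p q (1 / μ) = -μ ^ 2 * w1 (-q) p μ := by
  have h0 : μ ≠ 0 := by rintro rfl; simp at hμ
  have hs : (1 / μ) ^ (1 / 2 : ℂ) ≠ 0 := by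
    rw [Ne, cpow_eq_zero_iff]
    simp [h0]
  have hss : (1 / μ) ^ (1 / 2 : ℂ) * (1 / μ) ^ (1 / 2 : ℂ) = 1 / μ := by
    rw [← cpow_add _ _ (by simp [h0])]
    norm_num
  unfold w3 w1
  rw [h8_theta_inv _ _ _ hμ, h8_theta_inv _ _ _ hμ, h8_theta_inv _ _ _ hμ, h8_thetaQ_inv _ _ _ hμ]
  have e1 : cexp (2 * Real.pi * I * (p + 1 / 2) * q) =
      cexp (2 * Real.pi * I * p * q) * cexp (Real.pi * I * q) := by
    rw [← Complex.exp_add]; congr 1; ring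
  have e2 : cexp (Real.pi * I * (-q)) = (cexp (Real.pi * I * q))⁻¹ := by
    rw [← Complex.exp_neg]; congr 1; ring
  rw [e1, e2]
  have hE := Complex.exp_ne_zero (2 * Real.pi * I * p * q)
  have hF := Complex.exp_ne_zero (Real.pi * I * q)
  generalize cexp (2 * Real.pi * I * p * q) = E at *
  generalize cexp (Real.pi * I * q) = F at *
  generalize (1 / μ) ^ (1 / 2 : ℂ) = s at *
  simp only [neg_zero, mul_zero, Complex.exp_zero]
  have hμs : μ = 1 / (s * s) := by rw [hss]; simp
  generalize theta 0 0 μ = a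
  generalize theta 0 (1 / 2) μ = b
  generalize thetaQ (-q) (p + 1 / 2) μ = c
  by_cases hd : theta (-q) p μ = 0
  · simp [hd]
  generalize theta (-q) p μ = d at *
  rw [hμs]
  field_simp

lemma h8_iter (g : ℂ → ℂ) (hg : ∀ ν : ℂ, 0 < ν.re → DifferentiableAt ℂ g ν) (n : ℕ) :
    ∀ ν : ℂ, 0 < ν.re → HasDerivAt (iteratedDeriv n g) (iteratedDeriv (n + 1) g ν) ν := by
  have key : DifferentiableOn ℂ (iteratedDeriv n g) {ν : ℂ | 0 < ν.re} := by
    induction n with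
    | zero => 
      rw [iteratedDeriv_zero]
      exact fun ν hν => (hg ν hν).differentiableWithinAt
    | succ k ih =>
      rw [iteratedDeriv_succ]
      exact ih.deriv h8_isOpen
  intro ν hν
  rw [iteratedDeriv_succ]
  exact (key.differentiableAt (h8_isOpen.mem_nhds hν)).hasDerivAt

lemma h8_step (f E : ℂ → ℂ) (E' : ℂ → ℂ) (n : ℕ)
    (h : ∀ x : ℂ, 0 < x.re → iteratedDeriv n f x = E x)
    (hE : ∀ x : ℂ, 0 < x.re → HasDerivAt E (E' x) x) :
    ∀ x : ℂ, 0 < x.re → iteratedDeriv (n + 1) f x = E' x := by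
  intro x hx
  rw [iteratedDeriv_succ]
  have : iteratedDeriv n f =ᶠ[nhds x] E := by
    filter_upwards [h8_isOpen.mem_nhds hx] with y hy using h y hy
  rw [this.deriv_eq]
  exact (hE x hx).deriv

lemma h8_term (g : ℂ → ℂ) (hg : ∀ ν : ℂ, 0 < ν.re → DifferentiableAt ℂ g ν) (n k : ℕ) (c : ℂ)
    (x : ℂ) (hx : 0 < x.re) :
    HasDerivAt (fun x => c * x⁻¹ ^ (k + 1) * iteratedDeriv n g x⁻¹)
      (-c * x⁻¹ ^ (k + 3) * iteratedDeriv (n + 1) g x⁻¹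
        - c * (k + 1) * x⁻¹ ^ (k + 2) * iteratedDeriv n g x⁻¹) x := by
  have h0 : x ≠ 0 := by rintro rfl; simp at hx
  have hi := hasDerivAt_inv h0
  have hx' : 0 < (x⁻¹).re := by simpa using h8_inv_re hx
  have h1 := (h8_iter g hg n _ hx').comp x hi
  have h2 := ((hi.pow (k + 1)).const_mul c).mul h1
  refine h2.congr_deriv ?_
  simp only [Function.comp, Pi.pow_apply]
  push_cast
  rw [← inv_pow]
  ring

end Helpers

/-- Lemma 5.8: behavior of `w₃[p,q]` and its μ-derivatives up to order 4 under
`iμ ↦ i/μ`, expressed through `w₁[−q,p]`. -/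
theorem statement8 (p q μ : ℂ) (hμ : 0 < μ.re)
    (hθ : ∀ ν : ℂ, 0 < ν.re → theta p q ν ≠ 0) :
    w3 p q (1 / μ) = -μ ^ 2 * w1 (-q) p μ ∧
    iteratedDeriv 1 (w3 p q) (1 / μ) =
        μ ^ 4 * iteratedDeriv 1 (w1 (-q) p) μ + 2 * μ ^ 3 * w1 (-q) p μ ∧
    iteratedDeriv 2 (w3 p q) (1 / μ) =
        -μ ^ 6 * iteratedDeriv 2 (w1 (-q) p) μ - 6 * μ ^ 5 * iteratedDeriv 1 (w1 (-q) p) μ -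
          6 * μ ^ 4 * w1 (-q) p μ ∧
    iteratedDeriv 3 (w3 p q) (1 / μ) =
        μ ^ 8 * iteratedDeriv 3 (w1 (-q) p) μ + 12 * μ ^ 7 * iteratedDeriv 2 (w1 (-q) p) μ +
          36 * μ ^ 6 * iteratedDeriv 1 (w1 (-q) p) μ + 24 * μ ^ 5 * w1 (-q) p μ ∧
    iteratedDeriv 4 (w3 p q) (1 / μ) =
        -μ ^ 10 * iteratedDeriv 4 (w1 (-q) p) μ - 20 * μ ^ 9 * iteratedDeriv 3 (w1 (-q) p) μ -
          120 * μ ^ 8 * iteratedDeriv 2 (w1 (-q) p) μ -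
          240 * μ ^ 7 * iteratedDeriv 1 (w1 (-q) p) μ - 120 * μ ^ 6 * w1 (-q) p μ := by
  have hθ' : ∀ ν : ℂ, 0 < ν.re → theta (-q) p ν ≠ 0 := by
    intro ν hν h
    refine hθ (1 / ν) (h8_inv_re hν) ?_
    rw [h8_theta_inv _ _ _ hν, h, mul_zero]
  have hg : ∀ ν : ℂ, 0 < ν.re → DifferentiableAt ℂ (w1 (-q) p) ν := by
    intro ν hν
    unfold w1
    refine DifferentiableAt.div ?_ ?_ (mul_ne_zero (Complex.exp_ne_zero _) (hθ' ν hν))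
    · exact (((h8_diff_theta 0 0 hν).const_mul _).mul (h8_diff_theta 0 (1 / 2) hν)).mul
        (h8_diff_thetaQ _ _ hν)
    · exact (h8_diff_theta _ _ hν).const_mul _
  have E0 : ∀ x : ℂ, 0 < x.re → iteratedDeriv 0 (w3 p q) x =
      (-1) * x⁻¹ ^ (1 + 1) * iteratedDeriv 0 (w1 (-q) p) x⁻¹ := by
    intro x hx
    have := h8_w3_inv p q x⁻¹ (by simpa using h8_inv_re hx)
    simp only [one_div, inv_inv] at this
    simp only [iteratedDeriv_zero, this]
    ring
  generalize hG : w1 (-q) p = g at *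
  have E1 : ∀ x : ℂ, 0 < x.re → iteratedDeriv 1 (w3 p q) x =
      1 * x⁻¹ ^ (3 + 1) * iteratedDeriv 1 g x⁻¹ + 2 * x⁻¹ ^ (2 + 1) * iteratedDeriv 0 g x⁻¹ := by
    refine h8_step _ _ _ 0 E0 fun x hx => ?_
    refine (h8_term g hg 0 1 (-1) x hx).congr_deriv ?_
    push_cast
    ring
  have E2 : ∀ x : ℂ, 0 < x.re → iteratedDeriv 2 (w3 p q) x =
      (-1) * x⁻¹ ^ (5 + 1) * iteratedDeriv 2 g x⁻¹ + (-6) * x⁻¹ ^ (4 + 1) * iteratedDeriv 1 g x⁻¹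
        + (-6) * x⁻¹ ^ (3 + 1) * iteratedDeriv 0 g x⁻¹ := by
    refine h8_step _ _ _ 1 E1 fun x hx => ?_
    refine ((h8_term g hg 1 3 1 x hx).add (h8_term g hg 0 2 2 x hx)).congr_deriv ?_
    push_cast
    ring
  have E3 : ∀ x : ℂ, 0 < x.re → iteratedDeriv 3 (w3 p q) x =
      1 * x⁻¹ ^ (7 + 1) * iteratedDeriv 3 g x⁻¹ + 12 * x⁻¹ ^ (6 + 1) * iteratedDeriv 2 g x⁻¹
        + 36 * x⁻¹ ^ (5 + 1) * iteratedDeriv 1 g x⁻¹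
        + 24 * x⁻¹ ^ (4 + 1) * iteratedDeriv 0 g x⁻¹ := by
    refine h8_step _ _ _ 2 E2 fun x hx => ?_
    refine (((h8_term g hg 2 5 (-1) x hx).add (h8_term g hg 1 4 (-6) x hx)).add
      (h8_term g hg 0 3 (-6) x hx)).congr_deriv ?_
    push_cast
    ring
  have E4 : ∀ x : ℂ, 0 < x.re → iteratedDeriv 4 (w3 p q) x =
      (-1) * x⁻¹ ^ 10 * iteratedDeriv 4 g x⁻¹ + (-20) * x⁻¹ ^ 9 * iteratedDeriv 3 g x⁻¹
        + (-120) * x⁻¹ ^ 8 * iteratedDeriv 2 g x⁻¹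
        + (-240) * x⁻¹ ^ 7 * iteratedDeriv 1 g x⁻¹
        + (-120) * x⁻¹ ^ 6 * iteratedDeriv 0 g x⁻¹ := by
    refine h8_step _ _ _ 3 E3 fun x hx => ?_
    refine ((((h8_term g hg 3 7 1 x hx).add (h8_term g hg 2 6 12 x hx)).add
      (h8_term g hg 1 5 36 x hx)).add (h8_term g hg 0 4 24 x hx)).congr_deriv ?_
    push_cast
    ring
  have hi := h8_inv_re hμ
  refine ⟨?_, ?_, ?_, ?_, ?_⟩
  · have := E0 _ hi
    simp only [iteratedDeriv_zero] at this
    rw [this]; simp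
  · rw [E1 _ hi]; simp
  · rw [E2 _ hi]; simp; ring
  · rw [E3 _ hi]; simp
  · rw [E4 _ hi]; simp; ring

end
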